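/- Let u_0, u_1 be solutions of τ_0 u = zu and τ_1 u = zu respectively. Then for all integers m < n, |#_{[m,n]}(u_0,u_1) − (#_{(m,n)}(u_1) − #_{(m,n)}(u_0))| ≤ 1, and the same bound holds with #_{[m,n]}(u_0,u_1) replaced by #_{(m,n]}(u_0,u_1) or #_{[m,n)}(u_0,u_1). -/

import Mathlib

/-!
In Prüfer variables `u_j(k) = ρ_j sin θ_j`, `-a_j(k) u_j(k+1) = ρ_j cos θ_j`, the Wronskian is
`W_k = ρ_0 ρ_1 sin (θ_1 - θ_0)`.  The nodes of `u_j` count the increments of `⌈θ_j / π⌉`, and the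
weighted nodes of `W` count those of `⌈(θ_1 - θ_0) / π⌉`.  The difference
`Φ = ⌈(θ_1 - θ_0) / π⌉ - (⌈θ_1 / π⌉ - ⌈θ_0 / π⌉)` is `0` or `1` and depends only on the two
solutions at `k` and `k + 1`, so no angles are needed: with `s_j = u_j(k)`, replaced by `-u_j(k+1)`
when `u_j(k) = 0` (`half`, which has the sign `(-1)^(⌈θ_j / π⌉ - 1)`), one has `Φ(k) = 1` exactly
when `s_0 s_1 W_k > 0` (`phi`).

The heart of the proof is the one-step identity `jSgn_eq`,
`#_k(u_0,u_1) = Φ(k+1) - Φ(k) + [k node of u_1] - [k node of u_0]`.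
Summing over `m ≤ k < n` telescopes it, and what remains are boundary terms at `m` and `n`, each of
which takes only the values `0` and `1`.
-/

open Real

noncomputable section

/-- The Jacobi difference expression `(τ u)(n) = a(n)u(n+1) + a(n-1)u(n-1) + b(n)u(n)`. -/
def jTau (a b : ℤ → ℝ) (u : ℤ → ℝ) (n : ℤ) : ℝ :=
  a n * u (n + 1) + a (n - 1) * u (n - 1) + b n * u n

/-- `u` is a solution of `τ u = z u`: not identically zero and satisfying the recursion. -/
def IsJSolution (a b : ℤ → ℝ) (z : ℝ) (u : ℤ → ℝ) : Prop :=
  u ≠ 0 ∧ ∀ n : ℤ, jTau a b u n = z * u n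

/-- The (N-1)×(N-1) Jacobi matrix with diagonal b(1),…,b(N-1) and
off-diagonal a(1),…,a(N-2). -/
def jMatrix (N : ℕ) (a b : ℤ → ℝ) : Matrix (Fin (N - 1)) (Fin (N - 1)) ℝ :=
  fun i j =>
    if (i : ℕ) = (j : ℕ) then b (((i : ℕ) : ℤ) + 1)
    else if (i : ℕ) + 1 = (j : ℕ) then a (((i : ℕ) : ℤ) + 1)
    else if (j : ℕ) + 1 = (i : ℕ) then a (((j : ℕ) : ℤ) + 1)
    else 0

/-- `μ` is an eigenvalue of the matrix `J`. -/
def IsEV {m : ℕ} (J : Matrix (Fin m) (Fin m) ℝ) (μ : ℝ) : Prop :=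
  ∃ v : Fin m → ℝ, v ≠ 0 ∧ J.mulVec v = μ • v

/-- The number of eigenvalues of `J` in `Ω`. -/
def evCount {m : ℕ} (J : Matrix (Fin m) (Fin m) ℝ) (Ω : Set ℝ) : ℕ :=
  {μ ∈ Ω | IsEV J μ}.ncard

/-- The (modified) Wronskian `W_n(u₀,u₁) = u₀(n)a₁(n)u₁(n+1) - u₁(n)a₀(n)u₀(n+1)`. -/
def jW (a0 a1 : ℤ → ℝ) (u0 u1 : ℤ → ℝ) (n : ℤ) : ℝ :=
  u0 n * a1 n * u1 (n + 1) - u1 n * a0 n * u0 (n + 1)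

open Classical in
/-- The weighted node sign `#_n(u₀,u₁) ∈ {-1,0,1}` of the Wronskian at `n`. -/
def jSgn (a0 a1 u0 u1 : ℤ → ℝ) (n : ℤ) : ℤ :=
  if jW a0 a1 u0 u1 (n + 1) * u0 (n + 1) * u1 (n + 1) > 0 ∧
      (jW a0 a1 u0 u1 n * jW a0 a1 u0 u1 (n + 1) < 0 ∨
        (jW a0 a1 u0 u1 n = 0 ∧ jW a0 a1 u0 u1 (n + 1) ≠ 0)) then 1
  else if jW a0 a1 u0 u1 n * u0 (n + 1) * u1 (n + 1) > 0 ∧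
      (jW a0 a1 u0 u1 n * jW a0 a1 u0 u1 (n + 1) < 0 ∨
        (jW a0 a1 u0 u1 n ≠ 0 ∧ jW a0 a1 u0 u1 (n + 1) = 0)) then -1
  else 0

/-- `#_{[m,n]}(u₀,u₁) = Σ_{j=m}^{n-1} #_j(u₀,u₁)`. -/
def cntCC (a0 a1 u0 u1 : ℤ → ℝ) (m n : ℤ) : ℤ :=
  ∑ j ∈ Finset.Ico m n, jSgn a0 a1 u0 u1 j

open Classical in
/-- `#_{(m,n]}(u₀,u₁)`. -/
def cntOC (a0 a1 u0 u1 : ℤ → ℝ) (m n : ℤ) : ℤ :=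
  cntCC a0 a1 u0 u1 m n - if jW a0 a1 u0 u1 m = 0 then 1 else 0

open Classical in
/-- `#_{[m,n)}(u₀,u₁)`. -/
def cntCO (a0 a1 u0 u1 : ℤ → ℝ) (m n : ℤ) : ℤ :=
  cntCC a0 a1 u0 u1 m n + if jW a0 a1 u0 u1 n = 0 then 1 else 0

open Classical in
/-- `#_{(m,n)}(u₀,u₁)`. -/
def cntOO (a0 a1 u0 u1 : ℤ → ℝ) (m n : ℤ) : ℤ :=
  cntCC a0 a1 u0 u1 m n - (if jW a0 a1 u0 u1 m = 0 then 1 else 0)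
    + (if jW a0 a1 u0 u1 n = 0 then 1 else 0)

/-- `n` is a node of `u`: `u(n) = 0` or `a(n)u(n)u(n+1) > 0`. -/
def IsNode (a u : ℤ → ℝ) (n : ℤ) : Prop :=
  u n = 0 ∨ a n * u n * u (n + 1) > 0

open Classical in
/-- The number of nodes of `u` between `m` and `l`: nodes `n` with `m < n < l`,
plus one if `m` is a node with `u(m) ≠ 0`. -/
def nodeCount (a u : ℤ → ℝ) (m l : ℤ) : ℕ :=
  ((Finset.Ioo m l).filter (fun n => IsNode a u n)).card +
    if IsNode a u m ∧ u m ≠ 0 then 1 else 0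

/-- `ρ, θ` are Prüfer variables for `u` (w.r.t. the coefficient `a`). -/
def IsPrufer (a u ρ θ : ℤ → ℝ) : Prop :=
  ∀ n : ℤ, 0 < ρ n ∧ u n = ρ n * Real.sin (θ n) ∧
    -(a n) * u (n + 1) = ρ n * Real.cos (θ n) ∧
    ⌈θ n / π⌉ ≤ ⌈θ (n + 1) / π⌉ ∧ ⌈θ (n + 1) / π⌉ ≤ ⌈θ n / π⌉ + 1

/-! ### Half planes and the discrepancy `phi` -/

/-- The indicator of `0 < t`. -/
def pos (t : ℝ) : ℤ := if 0 < t then 1 else 0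

open Classical in
/-- The indicator of `k` being a node of `u`. -/
def nodeInd (a u : ℤ → ℝ) (k : ℤ) : ℤ := if IsNode a u k then 1 else 0

/-- A number, nonzero for solutions, whose sign tells in which half plane the Prüfer vector
`(u(k), -a(k) u(k+1))` lies, the half-line `u(k) = 0`, `u(k+1) < 0` counting as positive. -/
def half (u : ℤ → ℝ) (k : ℤ) : ℝ := if u k = 0 then -u (k + 1) else u k

/-- The discrepancy `⌈(θ₁ - θ₀)/π⌉ - (⌈θ₁/π⌉ - ⌈θ₀/π⌉)` at `k`, written without angles. -/
def phi (a0 a1 u0 u1 : ℤ → ℝ) (k : ℤ) : ℤ := pos (half u0 k * half u1 k * jW a0 a1 u0 u1 k)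

theorem pos_of_pos {t : ℝ} (h : 0 < t) : pos t = 1 := if_pos h

theorem pos_of_nonpos {t : ℝ} (h : t ≤ 0) : pos t = 0 := if_neg (not_lt.mpr h)

theorem pos_mem (t : ℝ) : pos t = 0 ∨ pos t = 1 := by
  unfold pos; split_ifs <;> simp

theorem pos_mul_left {c : ℝ} (hc : 0 < c) (t : ℝ) : pos (c * t) = pos t := by
  simp [pos, hc]

/-- A solution cannot vanish at two consecutive points, since the recursion would propagate the
zeros in both directions. -/
theorem IsJSolution.succ_ne_zero {a b u : ℤ → ℝ} {z : ℝ} (ha : ∀ n, a n < 0)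
    (h : IsJSolution a b z u) {k : ℤ} (hk : u k = 0) : u (k + 1) ≠ 0 := by
  intro hk1
  have key : ∀ i : ℤ, u i = 0 ∧ u (i + 1) = 0 := by
    intro i
    induction i using Int.inductionOn' (b := k) with
    | zero => exact ⟨hk, hk1⟩
    | succ i _ ih =>
      refine ⟨ih.2, ?_⟩
      have e := h.2 (i + 1)
      simpa [jTau, ih.1, ih.2, (ha (i + 1)).ne] using e
    | pred i _ ih =>
      have e := h.2 i
      refine ⟨?_, by simpa using ih.1⟩
      simpa [jTau, ih.1, ih.2, (ha (i - 1)).ne] using e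
  exact h.1 (funext fun i => (key i).1)

/-! ### The one-step identity -/

/-- For `u(k+1) ≠ 0`, `k` is a node exactly when `u(k+1)` lies on the other side than the Prüfer vector at `k`, that
is, when `⌈θ/π⌉` jumps. -/
theorem nodeInd_cases {a u : ℤ → ℝ} (ha : ∀ n, a n < 0) {k : ℤ} (hy : u (k + 1) ≠ 0) :
    (nodeInd a u k = 1 ∧ half u k * u (k + 1) < 0 ∧ u k * u (k + 1) ≤ 0) ∨
    (nodeInd a u k = 0 ∧ half u k * u (k + 1) > 0 ∧ u k * u (k + 1) > 0) := by
  by_cases hx : u k = 0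
  · left
    have := mul_self_pos.mpr hy
    refine ⟨by simp [nodeInd, IsNode, hx], ?_, by simp [hx]⟩
    simp only [half, hx, if_true]
    linarith
  · have hxy := mul_ne_zero hx hy
    have hiff : a k * u k * u (k + 1) > 0 ↔ u k * u (k + 1) < 0 := by
      rw [mul_assoc]
      constructor
      · intro h; exact neg_of_mul_pos_right h (ha k).le
      · intro h; exact mul_pos_of_neg_of_neg (ha k) h
    rcases lt_or_gt_of_ne hxy with h | h
    · left
      exact ⟨by simp [nodeInd, IsNode, hiff.mpr h], by simpa [half, hx] using h, h.le⟩
    · right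
      refine ⟨?_, by simpa [half, hx] using h, h⟩
      have : ¬ IsNode a u k := by
        rintro (h' | h')
        · exact hx h'
        · exact absurd (hiff.mp h') (not_lt.mpr h.le)
      simp [nodeInd, this]

theorem nodeInd_of_succ_zero {a u : ℤ → ℝ} {k : ℤ} (hx : u k ≠ 0) (hy : u (k + 1) = 0) :
    nodeInd a u k = 0 := by
  simp [nodeInd, IsNode, hx, hy]

/-- The value of `phi` at `k`, seen from `k + 1`. -/
theorem pos_succ_eq {a0 a1 u0 u1 : ℤ → ℝ} (ha0 : ∀ n, a0 n < 0) (ha1 : ∀ n, a1 n < 0) {k : ℤ}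
    (hy0 : u0 (k + 1) ≠ 0) (hy1 : u1 (k + 1) ≠ 0) :
    pos (u0 (k + 1) * u1 (k + 1) * jW a0 a1 u0 u1 k) =
      phi a0 a1 u0 u1 k - nodeInd a1 u1 k + nodeInd a0 u0 k := by
  have hsq : 0 < (u0 (k + 1) * u1 (k + 1)) ^ 2 := by positivity
  have e : phi a0 a1 u0 u1 k = pos ((half u0 k * u0 (k + 1)) * (half u1 k * u1 (k + 1)) *
      (u0 (k + 1) * u1 (k + 1) * jW a0 a1 u0 u1 k)) := by
    rw [phi, ← pos_mul_left hsq]; congr 1; ring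
  have hq0 : 0 < u0 (k + 1) ^ 2 := by positivity
  have hq1 : 0 < u1 (k + 1) ^ 2 := by positivity
  have eW : u0 (k + 1) * u1 (k + 1) * jW a0 a1 u0 u1 k =
      a1 k * u1 (k + 1) ^ 2 * (u0 k * u0 (k + 1)) -
        a0 k * u0 (k + 1) ^ 2 * (u1 k * u1 (k + 1)) := by
    unfold jW; ring
  have hc0 : a0 k * u0 (k + 1) ^ 2 < 0 := mul_neg_of_neg_of_pos (ha0 k) hq0
  have hc1 : a1 k * u1 (k + 1) ^ 2 < 0 := mul_neg_of_neg_of_pos (ha1 k) hq1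
  rw [e]
  rcases nodeInd_cases ha0 hy0 with ⟨n0, s0, x0⟩ | ⟨n0, s0, x0⟩ <;>
  rcases nodeInd_cases ha1 hy1 with ⟨n1, s1, x1⟩ | ⟨n1, s1, x1⟩
  · rw [pos_mul_left (mul_pos_of_neg_of_neg s0 s1), n0, n1]; ring
  · have hW : 0 < u0 (k + 1) * u1 (k + 1) * jW a0 a1 u0 u1 k := by
      rw [eW]
      have := mul_nonneg_of_nonpos_of_nonpos hc1.le x0
      have := mul_neg_of_neg_of_pos hc0 x1
      linarith
    rw [pos_of_pos hW, pos_of_nonpos (mul_neg_of_neg_of_pos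
      (mul_neg_of_neg_of_pos s0 s1) hW).le, n0, n1]; rfl
  · have hW : u0 (k + 1) * u1 (k + 1) * jW a0 a1 u0 u1 k < 0 := by
      rw [eW]
      have := mul_nonneg_of_nonpos_of_nonpos hc0.le x1
      have := mul_neg_of_neg_of_pos hc1 x0
      linarith
    rw [pos_of_nonpos hW.le, pos_of_pos (mul_pos_of_neg_of_neg
      (mul_neg_of_pos_of_neg s0 s1) hW), n0, n1]; rfl
  · rw [pos_mul_left (mul_pos s0 s1), n0, n1]; ring

theorem jSgn_eq_pos_sub {a0 a1 u0 u1 : ℤ → ℝ} {k : ℤ}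
    (hy0 : u0 (k + 1) ≠ 0) (hy1 : u1 (k + 1) ≠ 0) :
    jSgn a0 a1 u0 u1 k = pos (u0 (k + 1) * u1 (k + 1) * jW a0 a1 u0 u1 (k + 1)) -
      pos (u0 (k + 1) * u1 (k + 1) * jW a0 a1 u0 u1 k) := by
  have hne := mul_ne_zero hy0 hy1
  have e1 : jW a0 a1 u0 u1 (k + 1) * u0 (k + 1) * u1 (k + 1) =
    u0 (k + 1) * u1 (k + 1) * jW a0 a1 u0 u1 (k + 1) := by ring
  have e0 : jW a0 a1 u0 u1 k * u0 (k + 1) * u1 (k + 1) =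
    u0 (k + 1) * u1 (k + 1) * jW a0 a1 u0 u1 k := by ring
  unfold jSgn pos
  rw [e0, e1]
  generalize u0 (k + 1) * u1 (k + 1) = c at *
  generalize jW a0 a1 u0 u1 k = w at *
  generalize jW a0 a1 u0 u1 (k + 1) = w' at *
  rcases lt_or_gt_of_ne hne with hc | hc <;>
  rcases lt_trichotomy w 0 with hw | hw | hw <;>
  rcases lt_trichotomy w' 0 with hw' | hw' | hw' <;>
  simp [mul_pos_iff, mul_neg_iff, hc, hc.not_gt, hw, hw', hw.not_gt, hw'.not_gt] <;> grind

/-- The recursion across a zero: `a(k+1) u(k+2) = - a(k) u(k)` if `u(k+1) = 0`. -/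
theorem IsJSolution.across_zero {a b u : ℤ → ℝ} {z : ℝ} (h : IsJSolution a b z u) {k : ℤ}
    (hy : u (k + 1) = 0) : a (k + 1) * u (k + 1 + 1) = -(a k * u k) := by
  have e := h.2 (k + 1)
  simp only [jTau, hy, mul_zero, add_zero, add_sub_cancel_right] at e
  linarith

/-- If `u(k+1) = 0`, the Prüfer vector stays in the same half plane from `k` to `k + 1`. -/
theorem IsJSolution.half_across_zero {a b u : ℤ → ℝ} {z : ℝ} (ha : ∀ n, a n < 0)
    (h : IsJSolution a b z u) {k : ℤ} (hy : u (k + 1) = 0) :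
    u k ≠ 0 ∧ half u k = u k ∧ 0 < half u (k + 1) * u k := by
  have hx : u k ≠ 0 := fun hx => h.succ_ne_zero ha hx hy
  refine ⟨hx, by simp [half, hx], ?_⟩
  have e := h.across_zero hy
  simp only [half, hy, if_true]
  have h1 := mul_pos_of_neg_of_neg (ha (k + 1)) (ha k)
  have h2 : 0 < a k ^ 2 := by have := (ha k).ne; positivity
  have h3 : 0 < u k ^ 2 := by positivity
  have h4 : (a (k + 1) * a k) * (-u (k + 1 + 1) * u k) = a k ^ 2 * u k ^ 2 := by
    linear_combination (-(a k * u k)) * e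
  exact (mul_pos_iff_of_pos_left h1).mp (h4 ▸ mul_pos h2 h3)

/-- The one-step identity: the weighted node of the Wronskian at `k` is the increment of `phi`
plus the difference of the nodes of the two solutions. -/
theorem jSgn_eq {a0 b0 a1 b1 u0 u1 : ℤ → ℝ} {z : ℝ} (ha0 : ∀ n, a0 n < 0) (ha1 : ∀ n, a1 n < 0)
    (h0 : IsJSolution a0 b0 z u0) (h1 : IsJSolution a1 b1 z u1) (k : ℤ) :
    jSgn a0 a1 u0 u1 k = phi a0 a1 u0 u1 (k + 1) - phi a0 a1 u0 u1 k
      + (nodeInd a1 u1 k - nodeInd a0 u0 k) := by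
  by_cases hy0 : u0 (k + 1) = 0 <;> by_cases hy1 : u1 (k + 1) = 0
  · have hx0 := (h0.half_across_zero ha0 hy0).1
    have hx1 := (h1.half_across_zero ha1 hy1).1
    rw [nodeInd_of_succ_zero hx0 hy0, nodeInd_of_succ_zero hx1 hy1]
    simp [jSgn, phi, jW, hy0, hy1]
  · obtain ⟨hx0, hs0, ht0⟩ := h0.half_across_zero ha0 hy0
    have hW : jW a0 a1 u0 u1 k = a1 k * (u0 k * u1 (k + 1)) := by simp [jW, hy0]; ring
    have hW' : jW a0 a1 u0 u1 (k + 1) = a0 k * (u0 k * u1 (k + 1)) := by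
      have e := h0.across_zero hy0
      simp only [jW, hy0]
      linear_combination (-u1 (k + 1)) * e
    have hq0 : 0 < u0 k ^ 2 := by positivity
    have hq1 : 0 < u1 (k + 1) ^ 2 := by positivity
    have hP' : phi a0 a1 u0 u1 (k + 1) = 0 := by
      apply pos_of_nonpos
      have hs1 : half u1 (k + 1) = u1 (k + 1) := by simp [half, hy1]
      have e : half u0 (k + 1) * half u1 (k + 1) * jW a0 a1 u0 u1 (k + 1) =
          a0 k * ((half u0 (k + 1) * u0 k) * u1 (k + 1) ^ 2) := by
        rw [hW', hs1]; ring
      rw [e]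
      exact (mul_neg_of_neg_of_pos (ha0 k) (mul_pos ht0 hq1)).le
    have hS : jSgn a0 a1 u0 u1 k = 0 := by simp [jSgn, hy0]
    have e : half u0 k * half u1 k * jW a0 a1 u0 u1 k =
        (a1 k * u0 k ^ 2) * (half u1 k * u1 (k + 1)) := by
      rw [hW, hs0]; ring
    have hc := mul_neg_of_neg_of_pos (ha1 k) hq0
    rw [hS, hP', nodeInd_of_succ_zero hx0 hy0, phi, e]
    rcases nodeInd_cases ha1 hy1 with ⟨n1, s1, -⟩ | ⟨n1, s1, -⟩
    · rw [n1, pos_of_pos (mul_pos_of_neg_of_neg hc s1)]; rfl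
    · rw [n1, pos_of_nonpos (mul_neg_of_neg_of_pos hc s1).le]; rfl
  · obtain ⟨hx1, hs1, ht1⟩ := h1.half_across_zero ha1 hy1
    have hW : jW a0 a1 u0 u1 k = -a0 k * (u1 k * u0 (k + 1)) := by simp [jW, hy1]; ring
    have hW' : jW a0 a1 u0 u1 (k + 1) = -a1 k * (u1 k * u0 (k + 1)) := by
      have e := h1.across_zero hy1
      simp only [jW, hy1]
      linear_combination u0 (k + 1) * e
    have hq0 : 0 < u0 (k + 1) ^ 2 := by positivity
    have hq1 : 0 < u1 k ^ 2 := by positivity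
    have hP' : phi a0 a1 u0 u1 (k + 1) = 1 := by
      apply pos_of_pos
      have hs0 : half u0 (k + 1) = u0 (k + 1) := by simp [half, hy0]
      have e : half u0 (k + 1) * half u1 (k + 1) * jW a0 a1 u0 u1 (k + 1) =
          -a1 k * ((half u1 (k + 1) * u1 k) * u0 (k + 1) ^ 2) := by
        rw [hW', hs0]; ring
      rw [e]
      exact mul_pos (neg_pos.mpr (ha1 k)) (mul_pos ht1 hq0)
    have hS : jSgn a0 a1 u0 u1 k = 0 := by simp [jSgn, hy1]
    have e : half u0 k * half u1 k * jW a0 a1 u0 u1 k =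
        (-a0 k * u1 k ^ 2) * (half u0 k * u0 (k + 1)) := by
      rw [hW, hs1]; ring
    have hc := mul_pos (neg_pos.mpr (ha0 k)) hq1
    rw [hS, hP', nodeInd_of_succ_zero hx1 hy1, phi, e, pos_mul_left hc]
    rcases nodeInd_cases ha0 hy0 with ⟨n0, s0, -⟩ | ⟨n0, s0, -⟩
    · rw [n0, pos_of_nonpos s0.le]; rfl
    · rw [n0, pos_of_pos s0]; rfl
  · have hP' : phi a0 a1 u0 u1 (k + 1) =
        pos (u0 (k + 1) * u1 (k + 1) * jW a0 a1 u0 u1 (k + 1)) := by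
      simp [phi, half, hy0, hy1]
    rw [jSgn_eq_pos_sub hy0 hy1, hP', pos_succ_eq ha0 ha1 hy0 hy1]
    ring

/-! ### Summation and boundary terms -/

open Classical in
/-- `nodeCount` counts all nodes in `[m, n)` except a zero at `m`. -/
theorem nodeCount_eq (a u : ℤ → ℝ) {m n : ℤ} (hmn : m < n) :
    (nodeCount a u m n : ℤ) =
      (∑ k ∈ Finset.Ico m n, nodeInd a u k) - if u m = 0 then 1 else 0 := by
  have e : Finset.Ico m n = insert m (Finset.Ioo m n) := by
    ext i; simp only [Finset.mem_Ico, Finset.mem_insert, Finset.mem_Ioo]; omega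
  rw [e, Finset.sum_insert (by simp), nodeCount, Finset.card_filter]
  push_cast
  have : nodeInd a u m - (if u m = 0 then 1 else 0) = if IsNode a u m ∧ u m ≠ 0 then 1 else 0 := by
    by_cases h : u m = 0
    · simp [nodeInd, IsNode, h]
    · simp [nodeInd, h]
  rw [← this]
  simp only [nodeInd]
  ring

open Classical in
theorem phi_right_bounds (a0 a1 u0 u1 : ℤ → ℝ) (n : ℤ) :
    0 ≤ phi a0 a1 u0 u1 n ∧
      phi a0 a1 u0 u1 n + (if jW a0 a1 u0 u1 n = 0 then 1 else 0) ≤ 1 := by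
  by_cases h : jW a0 a1 u0 u1 n = 0
  · simp [phi, pos, h]
  · rcases pos_mem (half u0 n * half u1 n * jW a0 a1 u0 u1 n) with e | e <;> simp [phi, e, h]

open Classical in
/-- The boundary term at the left end. A zero of `u_0` or `u_1` at `m` corrects `phi` because
`nodeCount` does not count it. -/
theorem phi_left_bounds {a0 b0 a1 b1 u0 u1 : ℤ → ℝ} {z : ℝ}
    (ha0 : ∀ n, a0 n < 0) (ha1 : ∀ n, a1 n < 0)
    (h0 : IsJSolution a0 b0 z u0) (h1 : IsJSolution a1 b1 z u1) (m : ℤ) :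
    0 ≤ phi a0 a1 u0 u1 m - (if u1 m = 0 then 1 else 0) + (if u0 m = 0 then 1 else 0) ∧
      phi a0 a1 u0 u1 m - (if u1 m = 0 then 1 else 0) + (if u0 m = 0 then 1 else 0)
        + (if jW a0 a1 u0 u1 m = 0 then 1 else 0) ≤ 1 := by
  by_cases hx0 : u0 m = 0 <;> by_cases hx1 : u1 m = 0
  · simp [phi, pos, jW, hx0, hx1]
  · have hy0 := h0.succ_ne_zero ha0 hx0
    have hW : jW a0 a1 u0 u1 m ≠ 0 := by simp [jW, hx0, hx1, hy0, (ha0 m).ne]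
    have hP : phi a0 a1 u0 u1 m = 0 := by
      apply pos_of_nonpos
      have e : half u0 m * half u1 m * jW a0 a1 u0 u1 m =
          a0 m * (u0 (m + 1) * u1 m) ^ 2 := by
        simp only [half, jW, hx0, hx1, if_true, if_false]; ring
      rw [e]
      exact mul_nonpos_of_nonpos_of_nonneg (ha0 m).le (sq_nonneg _)
    simp [hP, hW, hx0, hx1]
  · have hy1 := h1.succ_ne_zero ha1 hx1
    have hW : jW a0 a1 u0 u1 m ≠ 0 := by simp [jW, hx0, hx1, hy1, (ha1 m).ne]
    have hP : phi a0 a1 u0 u1 m = 1 := by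
      apply pos_of_pos
      have e : half u0 m * half u1 m * jW a0 a1 u0 u1 m =
          -a1 m * (u1 (m + 1) * u0 m) ^ 2 := by
        simp only [half, jW, hx0, hx1, if_true, if_false]; ring
      rw [e]
      exact mul_pos (neg_pos.mpr (ha1 m)) (by positivity)
    simp [hP, hW, hx0, hx1]
  · simpa [hx0, hx1] using phi_right_bounds a0 a1 u0 u1 m

theorem cntCC_eq {a0 b0 a1 b1 u0 u1 : ℤ → ℝ} {z : ℝ} (ha0 : ∀ n, a0 n < 0) (ha1 : ∀ n, a1 n < 0)
    (h0 : IsJSolution a0 b0 z u0) (h1 : IsJSolution a1 b1 z u1) {m n : ℤ} (hmn : m ≤ n) :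
    cntCC a0 a1 u0 u1 m n = phi a0 a1 u0 u1 n - phi a0 a1 u0 u1 m
      + (∑ k ∈ Finset.Ico m n, nodeInd a1 u1 k - ∑ k ∈ Finset.Ico m n, nodeInd a0 u0 k) := by
  induction n, hmn using Int.leInduction with
  | base => simp [cntCC]
  | succ n hn ih =>
    have e : Finset.Ico m (n + 1) = insert n (Finset.Ico m n) := by
      ext i; simp only [Finset.mem_Ico, Finset.mem_insert]; omega
    have hnot : n ∉ Finset.Ico m n := by simp
    unfold cntCC at ih ⊢
    rw [e, Finset.sum_insert hnot, Finset.sum_insert hnot, Finset.sum_insert hnot, ih,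
      jSgn_eq ha0 ha1 h0 h1]
    ring

/-- The weighted node count of the Wronskian differs from the difference of the
node counts of the solutions by at most one. -/
theorem stmt_18 (a0 b0 a1 b1 : ℤ → ℝ)
    (ha0 : ∀ n : ℤ, a0 n < 0) (ha1 : ∀ n : ℤ, a1 n < 0) (z : ℝ)
    (u0 u1 : ℤ → ℝ)
    (h0 : IsJSolution a0 b0 z u0) (h1 : IsJSolution a1 b1 z u1)
    (m n : ℤ) (hmn : m < n) :
    |cntCC a0 a1 u0 u1 m n - ((nodeCount a1 u1 m n : ℤ) - (nodeCount a0 u0 m n : ℤ))| ≤ 1 ∧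
    |cntOC a0 a1 u0 u1 m n - ((nodeCount a1 u1 m n : ℤ) - (nodeCount a0 u0 m n : ℤ))| ≤ 1 ∧
    |cntCO a0 a1 u0 u1 m n - ((nodeCount a1 u1 m n : ℤ) - (nodeCount a0 u0 m n : ℤ))| ≤ 1 := by
  have hC := cntCC_eq ha0 ha1 h0 h1 hmn.le
  have hN0 := nodeCount_eq a0 u0 hmn
  have hN1 := nodeCount_eq a1 u1 hmn
  obtain ⟨l1, l2⟩ := phi_left_bounds ha0 ha1 h0 h1 m
  obtain ⟨r1, r2⟩ := phi_right_bounds a0 a1 u0 u1 n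
  unfold cntOC cntCO
  rw [hC, hN0, hN1]
  simp only [abs_le]
  split_ifs at * <;> omega
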